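/- arXiv:2012.02058 — 2 statements merged into one kernel-verified Lean document; each statement's English description precedes it below -/
import Mathlib

section
/- If f ∈ K = ⋂_{ℓ=1}^d ker D_ℓ satisfies f(0) = 0 (where 0 is the zero multi-index), then f = 0. Consequently the A-linear evaluation map pr_0 : K → M, f ↦ f(0), is injective. (This is the injectivity part of Lemma 3.4(ii) of the paper: an element of (E ⊗ OC)^{θ=0} is determined by its constant term, via the recurrence e_{I+e_k} = θ_k(ξ∂_k)(e_I) up to factorials.) -/
/-! The kernel equations say `(I ℓ + 1) • f (I + e_ℓ) = θ_ℓ (f I)`. Integers `I ℓ + 1` are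
invertible over `ℚ`, so `f I = 0` forces `f (I + e_ℓ) = 0`, and induction on `|I|` gives `f = 0`
once `f 0 = 0`. Injectivity follows by applying this to differences, `K` being the common kernel
of linear operators. -/

open scoped BigOperators

namespace HiggsLocal

variable {A M : Type*} [CommRing A] [Algebra ℚ A] [AddCommGroup M] [Module A M] {d : ℕ}

/-- `θ^I = θ 0 ^ I 0 ∘ ⋯ ∘ θ (d-1) ^ I (d-1)` as an `A`-linear endomorphism of `M`. -/
def thetaPow (θ : Fin d → Module.End A M) (I : Fin d → ℕ) : Module.End A M :=
  (List.ofFn fun ℓ => θ ℓ ^ I ℓ).prod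

/-- `I! = I(1)! ⋯ I(d)!` as a rational number. -/
def mfact (I : Fin d → ℕ) : ℚ := ∏ ℓ, ((I ℓ).factorial : ℚ)

/-- The operator `D_ℓ` on `W = ((Fin d → ℕ) → M)`, given by
`(D_ℓ f)(I) = θ_ℓ(f I) - (I ℓ + 1) • f (I + e_ℓ)`. -/
def Dop (θ : Fin d → Module.End A M) (ℓ : Fin d) :
    ((Fin d → ℕ) → M) →ₗ[A] ((Fin d → ℕ) → M) where
  toFun f := fun I => θ ℓ (f I) - ((I ℓ + 1 : ℕ) : A) • f (I + Pi.single ℓ 1)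
  map_add' f g := by
    funext I
    simp only [Pi.add_apply, map_add, smul_add]
    abel
  map_smul' a f := by
    funext I
    simp only [Pi.smul_apply, map_smul, RingHom.id_apply, smul_comm ((I ℓ + 1 : ℕ) : A) a,
      smul_sub]

/-- `K = ⋂_ℓ ker D_ℓ`. -/
def Kset (θ : Fin d → Module.End A M) : Set ((Fin d → ℕ) → M) :=
  {f | ∀ ℓ : Fin d, Dop θ ℓ f = 0}

/-- `m̃ (I) = (1/I!) • θ^I m`. -/
noncomputable def tildeFun (θ : Fin d → Module.End A M) (m : M) : (Fin d → ℕ) → M :=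
  fun I => algebraMap ℚ A (mfact I)⁻¹ • thetaPow θ I m

/-- `pr_c f = Σ_I c^I • f I`. -/
noncomputable def prC (c : Fin d → A)
    (f : (Fin d → ℕ) → M) : M :=
  ∑ᶠ I : Fin d → ℕ, (∏ ℓ, c ℓ ^ I ℓ) • f I

/-- `β_c m = Σ_I (c^I / I!) • θ^I m`. -/
noncomputable def betaC (θ : Fin d → Module.End A M) (c : Fin d → A) (m : M) : M :=
  ∑ᶠ I : Fin d → ℕ, ((∏ ℓ, c ℓ ^ I ℓ) * algebraMap ℚ A (mfact I)⁻¹) • thetaPow θ I m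

end HiggsLocal


namespace HiggsLocal

/-- The vanishing of `f` propagates from the constant term: `D_ℓ f = 0` at `I` reads
`(I ℓ + 1) • f (I + e_ℓ) = θ_ℓ (f I)`, and `I ℓ + 1` is a unit of the `ℚ`-algebra `A`. -/
theorem eq_zero_of_mem_Kset {A M : Type*} [CommRing A] [Algebra ℚ A] [AddCommGroup M]
    [Module A M] {d : ℕ} (θ : Fin d → Module.End A M) (f : (Fin d → ℕ) → M)
    (hf : f ∈ Kset θ) (h0 : f 0 = 0) : f = 0 := by
  have step : ∀ (I : Fin d → ℕ) (ℓ : Fin d), f I = 0 → f (I + Pi.single ℓ 1) = 0 := by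
    intro I ℓ hI
    have h : θ ℓ (f I) - ((I ℓ + 1 : ℕ) : A) • f (I + Pi.single ℓ 1) = 0 :=
      congrFun (hf ℓ) I
    rw [hI, map_zero, zero_sub, neg_eq_zero] at h
    have hu : IsUnit ((I ℓ + 1 : ℕ) : A) := by
      have hq : IsUnit ((I ℓ + 1 : ℕ) : ℚ) :=
        isUnit_iff_ne_zero.mpr (Nat.cast_ne_zero.mpr (Nat.succ_ne_zero _))
      simpa only [map_natCast] using hq.map (algebraMap ℚ A)
    exact hu.smul_eq_zero.mp h
  have main : ∀ (n : ℕ) (I : Fin d → ℕ), ∑ ℓ, I ℓ = n → f I = 0 := by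
    intro n
    induction n with
    | zero =>
      intro I hI
      have hI0 : I = 0 := by
        funext ℓ
        exact Finset.sum_eq_zero_iff.mp hI ℓ (Finset.mem_univ ℓ)
      rw [hI0, h0]
    | succ n ih =>
      intro I hI
      obtain ⟨ℓ, -, hℓ⟩ := Finset.exists_ne_zero_of_sum_ne_zero
        (hI.trans_ne (Nat.succ_ne_zero n))
      have hle : Pi.single ℓ 1 ≤ I := by
        intro j
        rcases eq_or_ne j ℓ with rfl | hj
        · simpa using Nat.one_le_iff_ne_zero.mpr hℓ
        · simp [hj]
      have hdec : I - Pi.single ℓ 1 + Pi.single ℓ 1 = I := tsub_add_cancel_of_le hle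
      rw [← hdec]
      refine step _ ℓ (ih _ ?_)
      have hs := congrArg (fun J : Fin d → ℕ => ∑ j, J j) hdec
      simp only [Pi.add_apply, Finset.sum_add_distrib, Finset.sum_pi_single', Finset.mem_univ,
        if_true, hI] at hs
      have h1 : ∑ j, (Pi.single ℓ 1 : Fin d → ℕ) j = 1 := by simp
      omega
  funext I
  exact main _ I rfl

end HiggsLocal

open HiggsLocal in
/-- If f ∈ K = ⋂_ℓ ker D_ℓ satisfies f(0) = 0, then f = 0.
Consequently the evaluation map pr_0 : K → M, f ↦ f(0), is injective. -/
theorem eval_zero_injective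
    {A M : Type*} [CommRing A] [Algebra ℚ A] [AddCommGroup M] [Module A M]
    {d : ℕ} (hd : 0 < d) (θ : Fin d → Module.End A M)
    (hcomm : ∀ i j : Fin d, Commute (θ i) (θ j))
    (hnil : ∀ m : M, ∃ N : ℕ, ∀ I : Fin d → ℕ, N ≤ ∑ ℓ, I ℓ → thetaPow θ I m = 0) :
    (∀ f : (Fin d → ℕ) → M, (Function.support f).Finite → f ∈ Kset θ →
      f 0 = 0 → f = 0) ∧
    Function.Injective
      (fun f : {f : (Fin d → ℕ) → M // (Function.support f).Finite ∧ f ∈ Kset θ} =>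
        (f : (Fin d → ℕ) → M) 0) := by
  refine ⟨fun f _ hf h0 => eq_zero_of_mem_Kset θ f hf h0, ?_⟩
  rintro ⟨f, -, hf⟩ ⟨g, -, hg⟩ (hfg : f 0 = g 0)
  have hsub : f - g ∈ Kset θ := fun ℓ => by rw [map_sub, hf ℓ, hg ℓ, sub_zero]
  exact Subtype.ext (sub_eq_zero.mp
    (eq_zero_of_mem_Kset θ (f - g) hsub (by rw [Pi.sub_apply, hfg, sub_self])))
end

section
/- The evaluation map pr_0 : K → M, f ↦ f(0), is an A-linear bijection, with inverse given by m ↦ m̃; equivalently, K = { m̃ : m ∈ M }. (This is Lemma 3.4(ii) of the paper in coordinate form: pr_τ : (E ⊗ OC)^{θ=0} → E ⊗ R̂‾_K is an isomorphism, and (E ⊗ OC)^{θ=0} is generated by the elements ẽ.) -/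
/-!
An element `f` of `K` satisfies `(I ℓ + 1) • f (I + e_ℓ) = θ ℓ (f I)`, and `I ℓ + 1` is invertible
in the `ℚ`-algebra `A`. Hence `f` is determined by `f 0` (`eq_of_mem_Kset`, by induction on `|I|`).
Since `θ^(I + e_ℓ) = θ ℓ ∘ θ^I` and `(I + e_ℓ)! = (I ℓ + 1) * I!`, the function `m̃` satisfies this
recursion with value `m` at `0` (`tildeFun_mem_Kset`, `tildeFun_zero`), and joint local nilpotence
makes its support finite (`finite_support_tildeFun`). So the elements of `K` are exactly the `m̃`.
-/

open scoped BigOperators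

namespace HiggsLocal

/-- The only place where commutativity of the `θ ℓ` enters: the new factor `θ ℓ` has to be moved
past `θ i ^ I i` for `i < ℓ`. -/
lemma thetaPow_add_single {A M : Type*} [CommRing A] [AddCommGroup M] [Module A M] :
    ∀ {d : ℕ} (θ : Fin d → Module.End A M) (_ : ∀ i j : Fin d, Commute (θ i) (θ j))
      (I : Fin d → ℕ) (ℓ : Fin d), thetaPow θ (I + Pi.single ℓ 1) = θ ℓ * thetaPow θ I
  | 0, _, _, _, ℓ => ℓ.elim0
  | d + 1, θ, hcomm, I, ℓ => by
    have split (J : Fin (d + 1) → ℕ) :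
        thetaPow θ J = θ 0 ^ J 0 * thetaPow (fun i => θ i.succ) (fun i => J i.succ) := by
      simp [thetaPow, List.ofFn_succ]
    rw [split, split I]
    induction ℓ using Fin.cases with
    | zero =>
      have h : (fun i : Fin d => (I + Pi.single 0 1 : Fin (d + 1) → ℕ) i.succ)
          = fun i => I i.succ := by
        funext i
        simp
      rw [h, ← mul_assoc]
      simp [pow_succ']
    | succ k =>
      have h : (fun i : Fin d => (I + Pi.single k.succ 1 : Fin (d + 1) → ℕ) i.succ)
          = (fun i => I i.succ) + Pi.single k 1 := by
        funext i
        simp [Pi.single_apply]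
      rw [h, thetaPow_add_single _ (fun i j => hcomm _ _), ← mul_assoc, ← mul_assoc,
        ((hcomm k.succ 0).pow_right (I 0)).eq]
      simp

lemma mfact_add_single {d : ℕ} (I : Fin d → ℕ) (ℓ : Fin d) :
    mfact (I + Pi.single ℓ 1) = ((I ℓ + 1 : ℕ) : ℚ) * mfact I := by
  unfold mfact
  rw [← Finset.mul_prod_erase _ _ (Finset.mem_univ ℓ),
    ← Finset.mul_prod_erase Finset.univ (fun i => ((I i).factorial : ℚ)) (Finset.mem_univ ℓ),
    ← mul_assoc]
  congr 1
  · simp [Nat.factorial_succ]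
  · refine Finset.prod_congr rfl fun i hi => ?_
    simp [Finset.ne_of_mem_erase hi]

lemma mem_Kset_iff {A M : Type*} [CommRing A] [AddCommGroup M] [Module A M] {d : ℕ}
    {θ : Fin d → Module.End A M} {f : (Fin d → ℕ) → M} :
    f ∈ Kset θ ↔ ∀ ℓ I, θ ℓ (f I) = ((I ℓ + 1 : ℕ) : A) • f (I + Pi.single ℓ 1) := by
  simp only [Kset, Set.mem_ofPred_eq, funext_iff]
  exact forall₂_congr fun ℓ I => sub_eq_zero

section

variable {A M : Type*} [CommRing A] [Algebra ℚ A] [AddCommGroup M] [Module A M] {d : ℕ}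

lemma tildeFun_zero (θ : Fin d → Module.End A M) (m : M) : tildeFun θ m 0 = m := by
  simp [tildeFun, mfact, thetaPow]

lemma tildeFun_mem_Kset {θ : Fin d → Module.End A M}
    (hcomm : ∀ i j : Fin d, Commute (θ i) (θ j)) (m : M) : tildeFun θ m ∈ Kset θ := by
  refine mem_Kset_iff.2 fun ℓ I => ?_
  have h : ((I ℓ + 1 : ℕ) : ℚ) * (mfact (I + Pi.single ℓ 1))⁻¹ = (mfact I)⁻¹ := by
    have h' : ((I ℓ + 1 : ℕ) : ℚ) ≠ 0 := Nat.cast_ne_zero.2 (Nat.succ_ne_zero _)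
    rw [mfact_add_single, mul_inv, mul_inv_cancel_left₀ h']
  simp only [tildeFun]
  rw [thetaPow_add_single θ hcomm, smul_smul, ← map_natCast (algebraMap ℚ A), ← map_mul, h,
    map_smul, Module.End.mul_apply]

lemma eq_of_mem_Kset {θ : Fin d → Module.End A M} {f g : (Fin d → ℕ) → M}
    (hf : f ∈ Kset θ) (hg : g ∈ Kset θ) (h0 : f 0 = g 0) : f = g := by
  rw [mem_Kset_iff] at hf hg
  have key : ∀ (n : ℕ) (I : Fin d → ℕ), ∑ ℓ, I ℓ = n → f I = g I := by
    intro n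
    induction n with
    | zero =>
      intro I hI
      have : I = 0 := by
        funext i
        exact Finset.sum_eq_zero_iff.1 hI i (Finset.mem_univ i)
      rw [this, h0]
    | succ n ih =>
      intro I hI
      obtain ⟨ℓ, -, hℓ⟩ : ∃ ℓ ∈ Finset.univ, I ℓ ≠ 0 :=
        Finset.exists_ne_zero_of_sum_ne_zero (by omega)
      obtain ⟨J, rfl⟩ : ∃ J : Fin d → ℕ, I = J + Pi.single ℓ 1 := by
        refine ⟨I - Pi.single ℓ 1, (tsub_add_cancel_of_le fun i => ?_).symm⟩
        rcases eq_or_ne i ℓ with rfl | hi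
        · simpa using Nat.one_le_iff_ne_zero.2 hℓ
        · simp [hi]
      have hJ : f J = g J := ih J (by
        simpa [Finset.sum_add_distrib] using hI)
      have hu : IsUnit ((J ℓ + 1 : ℕ) : A) := by
        rw [← map_natCast (algebraMap ℚ A)]
        exact (IsUnit.mk0 _ (Nat.cast_ne_zero.2 (Nat.succ_ne_zero _))).map _
      refine hu.smul_left_cancel.1 ?_
      rw [← hf, ← hg, hJ]
  exact funext fun I => key _ I rfl

lemma finite_support_tildeFun {θ : Fin d → Module.End A M} {m : M}
    (hnil : ∃ N : ℕ, ∀ I : Fin d → ℕ, N ≤ ∑ ℓ, I ℓ → thetaPow θ I m = 0) :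
    (Function.support (tildeFun θ m)).Finite := by
  obtain ⟨N, hN⟩ := hnil
  -- Every `I` in the support has `|I| < N`, hence lies in the finite box `[0, N]^d`.
  refine (Set.finite_Iic (fun _ : Fin d => N)).subset fun I hI i => ?_
  by_contra hlt
  have hlt' : N < I i := not_le.1 hlt
  refine hI ?_
  have hle : I i ≤ ∑ ℓ, I ℓ :=
    Finset.single_le_sum (fun _ _ => Nat.zero_le _) (Finset.mem_univ i)
  simp only [tildeFun]
  rw [hN I (by omega), smul_zero]

end

end HiggsLocal

open HiggsLocal in
/-- The evaluation map pr_0 : K → M, f ↦ f(0), is an A-linear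
bijection with inverse m ↦ m̃; equivalently K = { m̃ : m ∈ M }. -/
theorem eval_zero_bijective
    {A M : Type*} [CommRing A] [Algebra ℚ A] [AddCommGroup M] [Module A M]
    {d : ℕ} (hd : 0 < d) (θ : Fin d → Module.End A M)
    (hcomm : ∀ i j : Fin d, Commute (θ i) (θ j))
    (hnil : ∀ m : M, ∃ N : ℕ, ∀ I : Fin d → ℕ, N ≤ ∑ ℓ, I ℓ → thetaPow θ I m = 0) :
    Function.Bijective
      (fun f : {f : (Fin d → ℕ) → M // (Function.support f).Finite ∧ f ∈ Kset θ} =>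
        (f : (Fin d → ℕ) → M) 0) ∧
    (∀ f : (Fin d → ℕ) → M,
      ((Function.support f).Finite ∧ f ∈ Kset θ) ↔ ∃ m : M, f = tildeFun θ m) ∧
    (∀ m : M, tildeFun θ m 0 = m) := by
  have mem (m : M) : (Function.support (tildeFun θ m)).Finite ∧ tildeFun θ m ∈ Kset θ :=
    ⟨finite_support_tildeFun (hnil m), tildeFun_mem_Kset hcomm m⟩
  refine ⟨⟨fun f g h => Subtype.ext (eq_of_mem_Kset f.2.2 g.2.2 h),
    fun m => ⟨⟨tildeFun θ m, mem m⟩, tildeFun_zero θ m⟩⟩, fun f => ⟨fun hf => ⟨f 0, ?_⟩, ?_⟩,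
    tildeFun_zero θ⟩
  · exact eq_of_mem_Kset hf.2 (mem _).2 (tildeFun_zero θ _).symm
  · rintro ⟨m, rfl⟩
    exact mem m
end
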